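/- Let V be a nonempty Gotzmann set of monomials of degree d in K[x_1,…,x_n] with gcd(V) = 1, and assume |D_i(V)| = |V|_{<<n−1>>} for every i = 1, 2, …, n. If v ∈ M^d is a monomial with v ∉ V, then for every pair of indices i, j with x_i dividing v, the monomial (x_j/x_i)·v does not belong to V. -/

import Mathlib

/-!
Fix a variable `x_j` and let `D` be the part of `V` free of `x_j`. The shadow of `V` contains the
disjoint sets `x_j V` and `M' D`, where `M'` denotes the remaining variables. Macaulay's lower
bound on shadows (`macUp_le_card_shadOn`) gives `|M' D| ≥ |D|^{<n-2>}`; since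
`|D| = |V|_{<<n-1>>}` and `h^{<n-1>} = h + (h_{<<n-1>>})^{<n-2>}` (`macUp_eq_add`), the two sets
already have `|V|^{<n-1>} = |MV|` elements in total. Hence every element of `MV` divisible by `x_j`
lies in `x_j V`. If `u = (x_j / x_i) v` is in `V`, then `x_i u = x_j v` is in `MV`, so `v ∈ V`.

Macaulay's bound is proved for shadows with respect to a set `S` of variables, by induction on
`|S|`. Choose `p ∈ S`. Compressing along the two variables `p, i` keeps the cardinality and does
not enlarge the shadow (`shadOn_compress_subset`), and it lowers the total `x_p`-exponent unless
the set is already closed under `v ↦ (x_i / x_p) v`. For a set `D` closed under all these moves,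
let `E = {v / x_p : v ∈ D, x_p ∣ v}`. The shadow of `E` lies in `D`, so by induction on the total
`x_p`-exponent `|E|^{<m>} ≤ |D|`, and a numerical inequality (`add_macDDown_le`) turns this into
`|D \ x_p E| ≥ |D|_{<<m>>}`. The splitting of the shadow described above then gives the bound.
-/

open Finset

/-- `macUp n h` is `h^{<n>}`, computed via the greedy (Macaulay) binomial
representation `h = C(a_n, n) + C(a_{n-1}, n-1) + ⋯` (equivalently
`h = C(h(n)+n, n) + ⋯ + C(h(i)+i, i)` with `h(n) ≥ ⋯ ≥ h(i) ≥ 0`), giving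
`h^{<n>} = C(a_n+1, n) + C(a_{n-1}+1, n-1) + ⋯`; `macUp n 0 = 0`, `macUp 0 1 = 1`. -/
def macUp : ℕ → ℕ → ℕ
  | 0, h => h
  | n+1, h =>
    if h = 0 then 0
    else
      let a := Nat.findGreatest (fun a => Nat.choose a (n+1) ≤ h) (h + n + 1)
      Nat.choose (a+1) (n+1) + macUp n (h - Nat.choose a (n+1))
/-- `macDDown n h` is `h_{<<n>>} = C(a_n-1, n-1) + C(a_{n-1}-1, n-2) + ⋯` where
`h = C(a_n, n) + C(a_{n-1}, n-1) + ⋯` is the `n`th binomial representation;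
`macDDown n 0 = 0` and `macDDown 0 1 = 1`. -/
def macDDown : ℕ → ℕ → ℕ
  | 0, h => h
  | n+1, h =>
    if h = 0 then 0
    else
      let a := Nat.findGreatest (fun a => Nat.choose a (n+1) ≤ h) (h + n + 1)
      Nat.choose (a-1) n + macDDown n (h - Nat.choose a (n+1))
/-- Monomials in `K[x_1,…,x_n]` are identified with their exponent vectors
`Fin n → ℕ`; the degree of `v` is `∑ i, v i`.  `shad V` is the set
`MV = {x_j v : v ∈ V, 1 ≤ j ≤ n}`. -/
def shad {n : ℕ} (V : Finset (Fin n → ℕ)) : Finset (Fin n → ℕ) :=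
  (Finset.univ ×ˢ V).image fun p => p.2 + Pi.single p.1 1
/-- `gcd(V)` of a set of monomials: the exponentwise minimum. -/
noncomputable def gcdMon {n : ℕ} (V : Finset (Fin n → ℕ)) : Fin n → ℕ :=
  fun i => sInf ((fun v => v i) '' (V : Set (Fin n → ℕ)))
open Classical in
/-- `K_i(V)`: for `|V| ≤ 1` it is `V`; otherwise the set of monomials of `V`
divisible by `x_i · gcd(V)`. -/
noncomputable def Kset {n : ℕ} (V : Finset (Fin n → ℕ)) (i : Fin n) : Finset (Fin n → ℕ) :=
  if V.card ≤ 1 then V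
  else V.filter fun v => ∀ j, gcdMon V j + (Pi.single i 1 : Fin n → ℕ) j ≤ v j

/-- `D_i(V) = V \ K_i(V)`. -/
noncomputable def Dset {n : ℕ} (V : Finset (Fin n → ℕ)) (i : Fin n) : Finset (Fin n → ℕ) :=
  V \ Kset V i

/-! ### Numerical functions of binomial representations -/

lemma le_choose_add (n a : ℕ) (h : n + 1 ≤ a) : a ≤ a.choose (n + 1) + n := by
  induction a, h using Nat.le_induction with
  | base => simp
  | succ a ha ih =>
    have := Nat.choose_pos (n := a) (k := n) (by omega)
    rw [Nat.choose_succ_succ']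
    omega

lemma findGreatest_choose {n a r : ℕ} (ha : n + 1 ≤ a) (hr : r < a.choose n) :
    Nat.findGreatest (fun b => Nat.choose b (n + 1) ≤ a.choose (n + 1) + r)
      (a.choose (n + 1) + r + n + 1) = a := by
  rw [Nat.findGreatest_eq_iff]
  refine ⟨?_, fun _ => Nat.le_add_right _ _, fun b hb _ => ?_⟩
  · have := le_choose_add n a ha
    omega
  · have := Nat.choose_le_choose (n + 1) (show a + 1 ≤ b from hb)
    rw [Nat.choose_succ_succ'] at this
    simp only [not_le]
    omega

lemma macUp_rep {n a r : ℕ} (ha : n + 1 ≤ a) (hr : r < a.choose n) :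
    macUp (n + 1) (a.choose (n + 1) + r) = (a + 1).choose (n + 1) + macUp n r := by
  have := Nat.choose_pos ha
  rw [macUp, if_neg (by omega)]
  simp only [findGreatest_choose ha hr, Nat.add_sub_cancel_left]

lemma macDDown_rep {n a r : ℕ} (ha : n + 1 ≤ a) (hr : r < a.choose n) :
    macDDown (n + 1) (a.choose (n + 1) + r) = (a - 1).choose n + macDDown n r := by
  have := Nat.choose_pos ha
  rw [macDDown, if_neg (by omega)]
  simp only [findGreatest_choose ha hr, Nat.add_sub_cancel_left]

lemma macUp_zero_right (n : ℕ) : macUp n 0 = 0 := by cases n <;> simp [macUp]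

lemma macDDown_zero_right (n : ℕ) : macDDown n 0 = 0 := by cases n <;> simp [macDDown]

/-- The leading term of the binomial representation. -/
lemma exists_rep (n h : ℕ) (hh : 0 < h) :
    ∃ a r, n + 1 ≤ a ∧ r < a.choose n ∧ h = a.choose (n + 1) + r := by
  induction h, hh using Nat.le_induction with
  | base => exact ⟨n + 1, 0, le_rfl, by simp, by simp⟩
  | succ h _ ih =>
    obtain ⟨a, r, ha, hr, rfl⟩ := ih
    by_cases h1 : r + 1 < a.choose n
    · exact ⟨a, r + 1, ha, h1, by ring⟩
    · refine ⟨a + 1, 0, by omega, Nat.choose_pos (by omega), ?_⟩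
      rw [Nat.choose_succ_succ']
      omega

lemma macUp_choose {m a : ℕ} (ha : m ≤ a) : macUp m (a.choose m) = (a + 1).choose m := by
  cases m with
  | zero => simp [macUp]
  | succ n =>
    simpa [macUp_zero_right] using macUp_rep (r := 0) ha (Nat.choose_pos (by omega))

lemma macUp_strictMono (m : ℕ) : StrictMono (macUp m) := by
  induction m with
  | zero => exact fun x y h => by simpa [macUp] using h
  | succ m ih =>
    intro x y hxy
    obtain ⟨b, s, hb, hs, rfl⟩ := exists_rep m y (by omega)
    rw [macUp_rep hb hs]
    have hbpos := Nat.choose_pos (show m + 1 ≤ b + 1 by omega)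
    rcases Nat.eq_zero_or_pos x with rfl | hx
    · rw [macUp_zero_right]; omega
    obtain ⟨a, r, ha, hr, rfl⟩ := exists_rep m x hx
    rw [macUp_rep ha hr]
    rcases lt_trichotomy a b with hab | rfl | hab
    · have h1 := ih hr
      rw [macUp_choose (by omega)] at h1
      have h2 := Nat.choose_le_choose (m + 1) (show a + 1 + 1 ≤ b + 1 by omega)
      rw [Nat.choose_succ_succ' (a + 1)] at h2
      omega
    · have := ih (show r < s by omega)
      omega
    · have h2 := Nat.choose_le_choose (m + 1) (show b + 1 ≤ a from hab)
      rw [Nat.choose_succ_succ' b] at h2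
      omega

/-- The recursion for `macUp` also holds at the boundary value `s = C(b, m)`. -/
lemma macUp_rep_le {m b s : ℕ} (hb : m + 1 ≤ b) (hs : s ≤ b.choose m) :
    macUp (m + 1) (b.choose (m + 1) + s) = (b + 1).choose (m + 1) + macUp m s := by
  rcases hs.lt_or_eq with hs | rfl
  · exact macUp_rep hb hs
  · have h1 := macUp_choose (show m + 1 ≤ b + 1 by omega)
    rw [Nat.choose_succ_succ' (b + 1), Nat.choose_succ_succ' b] at h1
    rw [macUp_choose (m := m) (by omega), add_comm (b.choose (m + 1)), h1,
      Nat.choose_succ_succ' b m]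
    have := Nat.choose_succ_succ' b m
    omega

lemma macDDown_le (m r : ℕ) : macDDown m r ≤ r := by
  induction m generalizing r with
  | zero => simp [macDDown]
  | succ m ih =>
    rcases Nat.eq_zero_or_pos r with rfl | hr
    · simp [macDDown]
    obtain ⟨a, s, ha, hs, rfl⟩ := exists_rep m r hr
    rw [macDDown_rep ha hs]
    obtain ⟨a, rfl⟩ : ∃ c, a = c + 1 := ⟨a - 1, by omega⟩
    have := ih s
    simp only [Nat.add_sub_cancel, Nat.choose_succ_succ']
    omega

lemma macDDown_le_choose (m : ℕ) {r a : ℕ} (hr : r < a.choose (m + 1)) :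
    macDDown (m + 1) r ≤ (a - 1).choose m := by
  induction m generalizing r a with
  | zero =>
    rcases Nat.eq_zero_or_pos r with rfl | h
    · simp [macDDown]
    obtain ⟨b, s, hb, hs, rfl⟩ := exists_rep 0 r h
    rw [macDDown_rep hb hs]
    simp only [Nat.choose_zero_right] at hs
    obtain rfl : s = 0 := by omega
    simp [macDDown]
  | succ m ih =>
    rcases Nat.eq_zero_or_pos r with rfl | h
    · simp [macDDown]
    obtain ⟨b, s, hb, hs, rfl⟩ := exists_rep (m + 1) r h
    rw [macDDown_rep hb hs]
    have hba : b < a := by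
      by_contra hcon
      have := Nat.choose_le_choose (m + 1 + 1) (not_lt.mp hcon)
      omega
    have h1 := ih hs
    have h2 := Nat.choose_le_choose (m + 1) (show b ≤ a - 1 by omega)
    obtain ⟨b, rfl⟩ : ∃ c, b = c + 1 := ⟨b - 1, by omega⟩
    rw [Nat.choose_succ_succ' b] at h2
    simp only [Nat.add_sub_cancel] at h1 h2 ⊢
    omega

/-- `h^{<m+1>} = h + (h_{<<m+1>>})^{<m>}`: the elements of the shadow of a lex segment divisible
by the last variable, and those which are not. -/
lemma macUp_eq_add (m h : ℕ) : macUp (m + 1) h = h + macUp m (macDDown (m + 1) h) := by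
  induction m generalizing h with
  | zero =>
    rcases Nat.eq_zero_or_pos h with rfl | hh
    · simp [macUp, macDDown]
    obtain ⟨a, r, ha, hr, rfl⟩ := exists_rep 0 h hh
    rw [macUp_rep ha hr, macDDown_rep ha hr]
    simp only [Nat.choose_zero_right] at hr
    obtain rfl : r = 0 := by omega
    simp [macUp, macDDown]
  | succ m ih =>
    rcases Nat.eq_zero_or_pos h with rfl | hh
    · simp [macUp_zero_right, macDDown_zero_right]
    obtain ⟨a, r, ha, hr, rfl⟩ := exists_rep (m + 1) h hh
    have hle := macDDown_le_choose m hr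
    rw [macUp_rep ha hr, macDDown_rep ha hr, macUp_rep_le (by omega) hle, ih r]
    obtain ⟨a, rfl⟩ : ∃ c, a = c + 1 := ⟨a - 1, by omega⟩
    rw [Nat.choose_succ_succ' (a + 1)]
    simp only [Nat.add_sub_cancel]
    omega

/-- If a set of `k` monomials can have its shadow inside a set of `h` monomials, then at least
`h_{<<m+1>>}` of the `h` monomials remain besides `k` others. -/
lemma add_macDDown_le (m : ℕ) {k h : ℕ} (hk : macUp (m + 1) k ≤ h) :
    k + macDDown (m + 1) h ≤ h := by
  induction m generalizing k h with
  | zero =>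
    rcases Nat.eq_zero_or_pos h with rfl | hh
    · rw [macUp_eq_add] at hk
      simp [macDDown]; omega
    have h1 : macDDown (0 + 1) h ≤ 1 := by
      simpa using macDDown_le_choose 0 (a := h + 1) (r := h) (by simp)
    have h2 : 0 < k → k < h := by
      intro h0
      obtain ⟨a, r, ha, hr, rfl⟩ := exists_rep 0 k h0
      rw [macUp_rep ha hr] at hk
      simp [macUp] at *
      omega
    omega
  | succ m ih =>
    rcases Nat.eq_zero_or_pos h with rfl | hh
    · rw [macUp_eq_add] at hk
      simp [macDDown]; omega
    obtain ⟨a, r, ha, hr, rfl⟩ := exists_rep (m + 1) h hh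
    have hka : k < a.choose (m + 1 + 1) := by
      rw [← (macUp_strictMono (m + 1 + 1)).lt_iff_lt, macUp_choose ha, Nat.choose_succ_succ']
      omega
    rw [macDDown_rep ha hr]
    obtain ⟨a, rfl⟩ : ∃ c, a = c + 1 := ⟨a - 1, by omega⟩
    have hp := Nat.choose_succ_succ' a (m + 1)
    simp only [Nat.add_sub_cancel] at hp ⊢
    rcases le_or_gt k (a.choose (m + 1 + 1)) with hle | hgt
    · have := macDDown_le (m + 1) r
      omega
    · obtain ⟨s, rfl⟩ := Nat.exists_eq_add_of_lt hgt
      have ha' : m + 1 + 1 ≤ a := by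
        by_contra hcon
        obtain rfl : a = m + 1 := by omega
        simp at hka
      rw [add_assoc (a.choose (m + 1 + 1)), macUp_rep ha' (by omega)] at hk
      have := @ih (s + 1) r (by omega)
      omega

/-! ### Shadows and compression -/

/-- The shadow of `D` with respect to the variables `x_k`, `k ∈ S`. -/
def shadOn {n : ℕ} (S : Finset (Fin n)) (D : Finset (Fin n → ℕ)) : Finset (Fin n → ℕ) :=
  (S ×ˢ D).image fun p => p.2 + Pi.single p.1 1

lemma mem_shadOn {n : ℕ} {S : Finset (Fin n)} {D : Finset (Fin n → ℕ)} {w : Fin n → ℕ} :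
    w ∈ shadOn S D ↔ ∃ k ∈ S, ∃ v ∈ D, v + Pi.single k 1 = w := by
  simp [shadOn]
  grind

/-- Two monomials lie in the same block for `p, i` if they agree in all variables other than
`x_p, x_i` and have the same degree in these two variables together. -/
def SameBlock {n : ℕ} (p i : Fin n) (u v : Fin n → ℕ) : Prop :=
  u p + u i = v p + v i ∧ ∀ k, k ≠ p → k ≠ i → u k = v k

open Classical in
/-- The elements of `D` in the `p, i`-block of `v`. -/
noncomputable def block {n : ℕ} (p i : Fin n) (D : Finset (Fin n → ℕ)) (v : Fin n → ℕ) :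
    Finset (Fin n → ℕ) :=
  D.filter fun u => SameBlock p i u v

/-- The number of elements of `D` in the block of `v` with smaller `x_p`-exponent. -/
noncomputable def blockRank {n : ℕ} (p i : Fin n) (D : Finset (Fin n → ℕ)) (v : Fin n → ℕ) : ℕ :=
  ((block p i D v).filter fun u => u p < v p).card

/-- The monomial in the block of `v` whose `x_p`-exponent is `blockRank p i D v`. -/
noncomputable def pushDown {n : ℕ} (p i : Fin n) (D : Finset (Fin n → ℕ)) (v : Fin n → ℕ) :
    Fin n → ℕ :=
  fun k => if k = p then blockRank p i D v
    else if k = i then v p + v i - blockRank p i D v else v k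

/-- The compression of `D` along `p, i`: each block is replaced by the same number of monomials,
those of smallest `x_p`-exponent. -/
noncomputable def compress {n : ℕ} (p i : Fin n) (D : Finset (Fin n → ℕ)) :
    Finset (Fin n → ℕ) :=
  D.image (pushDown p i D)

section
variable {n : ℕ} {p i : Fin n} {D : Finset (Fin n → ℕ)} {u v w : Fin n → ℕ}

lemma SameBlock.symm (h : SameBlock p i u v) : SameBlock p i v u :=
  ⟨h.1.symm, fun k h1 h2 => (h.2 k h1 h2).symm⟩

lemma SameBlock.trans (h : SameBlock p i u v) (h' : SameBlock p i v w) : SameBlock p i u w :=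
  ⟨h.1.trans h'.1, fun k h1 h2 => (h.2 k h1 h2).trans (h'.2 k h1 h2)⟩

lemma SameBlock.ext (h : SameBlock p i u v) (hp : u p = v p) : u = v := by
  funext k
  by_cases h1 : k = p
  · rw [h1, hp]
  by_cases h2 : k = i
  · have := h.1
    rw [h2]; omega
  exact h.2 k h1 h2

lemma mem_block : u ∈ block p i D v ↔ u ∈ D ∧ SameBlock p i u v := by
  classical simp [block]

lemma block_congr (h : SameBlock p i u v) : block p i D u = block p i D v := by
  ext x
  rw [mem_block, mem_block]
  exact ⟨fun hx => ⟨hx.1, hx.2.trans h⟩, fun hx => ⟨hx.1, hx.2.trans h.symm⟩⟩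

lemma blockRank_lt_card (hv : v ∈ D) : blockRank p i D v < (block p i D v).card := by
  apply Finset.card_lt_card
  rw [Finset.filter_ssubset]
  exact ⟨v, mem_block.2 ⟨hv, rfl, fun _ _ _ => rfl⟩, lt_irrefl _⟩

/-- The elements counted by `blockRank` have distinct `x_p`-exponents, all in `{0, …, v p - 1}`. -/
lemma image_lower_subset :
    ((block p i D v).filter fun u => u p < v p).image (fun u => u p) ⊆ Finset.range (v p) := by
  intro x hx
  simp only [Finset.mem_image, Finset.mem_filter] at hx
  obtain ⟨u, ⟨-, hu⟩, rfl⟩ := hx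
  exact Finset.mem_range.2 hu

lemma injOn_block (s : Finset (Fin n → ℕ)) (hs : s ⊆ block p i D v) :
    Set.InjOn (fun u : Fin n → ℕ => u p) (s : Set (Fin n → ℕ)) := by
  intro a ha b hb hab
  have h1 := (mem_block.1 (hs ha)).2
  have h2 := (mem_block.1 (hs hb)).2
  exact (h1.trans h2.symm).ext hab

lemma card_image_lower :
    (((block p i D v).filter fun u => u p < v p).image (fun u => u p)).card
      = blockRank p i D v :=
  Finset.card_image_of_injOn (injOn_block (D := D) (i := i) (v := v) _ (Finset.filter_subset _ _))

lemma blockRank_le : blockRank p i D v ≤ v p := by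
  rw [← card_image_lower]
  simpa using Finset.card_le_card (image_lower_subset (p := p) (i := i) (D := D) (v := v))

lemma pushDown_apply_p : pushDown p i D v p = blockRank p i D v := by simp [pushDown]

lemma sameBlock_pushDown (hpi : i ≠ p) : SameBlock p i (pushDown p i D v) v := by
  have := blockRank_le (p := p) (i := i) (D := D) (v := v)
  refine ⟨?_, fun k h1 h2 => ?_⟩
  · simp only [pushDown, if_neg hpi, if_true]; omega
  · simp [pushDown, h1, h2]

lemma pushDown_injOn (hpi : i ≠ p) : Set.InjOn (pushDown p i D) (D : Set (Fin n → ℕ)) := by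
  -- Elements with the same image share a block; there the rank is strictly increasing in `u p`.
  have key : ∀ a ∈ D, ∀ b, SameBlock p i a b → a p < b p →
      blockRank p i D a < blockRank p i D b := by
    intro a ha b hab hlt
    unfold blockRank
    rw [block_congr hab]
    apply Finset.card_lt_card
    refine ⟨fun x hx => ?_, fun hsub => ?_⟩
    · rw [Finset.mem_filter] at hx ⊢
      exact ⟨hx.1, hx.2.trans hlt⟩
    · have := hsub (Finset.mem_filter.2 ⟨mem_block.2 ⟨ha, hab⟩, hlt⟩)
      exact lt_irrefl _ (Finset.mem_filter.1 this).2
  intro a ha b hb hab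
  have hs : SameBlock p i a b := by
    have h1 := (sameBlock_pushDown (D := D) (v := a) hpi).symm
    rw [hab] at h1
    exact h1.trans (sameBlock_pushDown hpi)
  have hr : blockRank p i D a = blockRank p i D b := by
    rw [← pushDown_apply_p, ← pushDown_apply_p, hab]
  rcases lt_trichotomy (a p) (b p) with h | h | h
  · exact absurd hr (key a ha b hs h).ne
  · exact hs.ext h
  · exact absurd hr (key b hb a hs.symm h).ne'

lemma card_compress (hpi : i ≠ p) : (compress p i D).card = D.card :=
  Finset.card_image_of_injOn (pushDown_injOn hpi)

lemma mem_compress (hpi : i ≠ p) : w ∈ compress p i D ↔ w p < (block p i D w).card := by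
  constructor
  · intro h
    obtain ⟨v, hv, rfl⟩ := Finset.mem_image.1 h
    rw [pushDown_apply_p, block_congr (sameBlock_pushDown hpi)]
    exact blockRank_lt_card hv
  · intro h
    -- The ranks of the elements of the block fill up an initial segment by counting.
    have hinj : Set.InjOn (blockRank p i D) (block p i D w : Set (Fin n → ℕ)) := by
      intro a ha b hb hab
      have h1 := mem_block.1 (Finset.mem_coe.1 ha)
      have h2 := mem_block.1 (Finset.mem_coe.1 hb)
      refine pushDown_injOn hpi h1.1 h2.1 (SameBlock.ext (p := p) (i := i) ?_ ?_)
      · exact ((sameBlock_pushDown hpi).trans (h1.2.trans h2.2.symm)).trans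
          (sameBlock_pushDown hpi).symm
      · rw [pushDown_apply_p, pushDown_apply_p, hab]
    have hsub : (block p i D w).image (blockRank p i D) ⊆
        Finset.range (block p i D w).card := by
      intro x hx
      obtain ⟨a, ha, rfl⟩ := Finset.mem_image.1 hx
      have h1 := mem_block.1 ha
      rw [Finset.mem_range, ← block_congr h1.2]
      exact blockRank_lt_card h1.1
    have heq := Finset.eq_of_subset_of_card_le hsub
      (by rw [Finset.card_image_of_injOn hinj, Finset.card_range])
    have hw : w p ∈ (block p i D w).image (blockRank p i D) := by
      rw [heq]; exact Finset.mem_range.2 h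
    obtain ⟨a, ha, hap⟩ := Finset.mem_image.1 hw
    have h1 := mem_block.1 ha
    refine Finset.mem_image.2 ⟨a, h1.1, ?_⟩
    exact ((sameBlock_pushDown hpi).trans h1.2).ext (by rw [pushDown_apply_p, hap])

lemma SameBlock.add (h : SameBlock p i u v) (x : Fin n → ℕ) : SameBlock p i (u + x) (v + x) := by
  refine ⟨?_, fun k h1 h2 => ?_⟩
  · have := h.1
    simp only [Pi.add_apply]; omega
  · simp only [Pi.add_apply, h.2 k h1 h2]

lemma sameBlock_single (hpi : i ≠ p) (v : Fin n → ℕ) :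
    SameBlock p i (v + Pi.single i 1) (v + Pi.single p 1) := by
  refine ⟨?_, fun k h1 h2 => ?_⟩
  · simp [hpi, hpi.symm]; omega
  · simp [h1, h2]

/-- The shadow of a compression is contained in the compression of the shadow. -/
lemma shadOn_compress_subset {S : Finset (Fin n)} (hpi : i ≠ p) (hi : i ∈ S) (hp : p ∈ S) :
    shadOn S (compress p i D) ⊆ compress p i (shadOn S D) := by
  intro w hw
  obtain ⟨k, hk, u, hu, rfl⟩ := mem_shadOn.1 hw
  rw [mem_compress hpi] at hu ⊢
  have himg : ∀ l ∈ S, SameBlock p i (u + Pi.single l 1) (u + Pi.single k 1) →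
      (block p i D u).image (fun x => x + Pi.single l 1) ⊆
      block p i (shadOn S D) (u + Pi.single k 1) := by
    intro l hl hlk x hx
    obtain ⟨a, ha, rfl⟩ := Finset.mem_image.1 hx
    have h1 := mem_block.1 ha
    exact mem_block.2 ⟨mem_shadOn.2 ⟨l, hl, a, h1.1, rfl⟩, (h1.2.add _).trans hlk⟩
  have hcard : ((block p i D u).image (fun x => x + Pi.single k 1)).card
      = (block p i D u).card :=
    Finset.card_image_of_injective _ (add_left_injective _)
  have hk1 := himg k hk ⟨rfl, fun _ _ _ => rfl⟩
  by_cases hkp : k = p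
  · subst hkp
    -- Besides the multiples of `x_p` coming from the block, the shadow contains `x_i a`, where
    -- `a` has the least `x_p`-exponent in the block.
    obtain ⟨a, ha, hmin⟩ := Finset.exists_min_image (block k i D u) (fun x => x k)
      (Finset.card_pos.1 (by omega))
    have hnew : a + Pi.single i 1 ∉ (block k i D u).image (fun x => x + Pi.single k 1) := by
      intro hx
      obtain ⟨b, hb, hab⟩ := Finset.mem_image.1 hx
      have h1 := hmin b hb
      have h2 := congrFun hab k
      simp [hpi.symm] at h2
      omega
    have hmem := himg i hi (sameBlock_single hpi u) (Finset.mem_image_of_mem _ ha)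
    have := Finset.card_le_card (Finset.insert_subset hmem hk1)
    rw [Finset.card_insert_of_notMem hnew, hcard] at this
    simp only [Pi.add_apply, Pi.single_eq_same]
    omega
  · have := Finset.card_le_card hk1
    rw [hcard] at this
    simp only [Pi.add_apply, Pi.single_eq_of_ne (Ne.symm hkp), add_zero]
    omega

lemma card_shadOn_compress_le {S : Finset (Fin n)} (hpi : i ≠ p) (hi : i ∈ S) (hp : p ∈ S) :
    (shadOn S (compress p i D)).card ≤ (shadOn S D).card :=
  (Finset.card_le_card (shadOn_compress_subset hpi hi hp)).trans (card_compress hpi).le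

/-- A violation of closure under `x_p v ↦ x_i v` makes compression lower the total
`x_p`-exponent. -/
lemma sum_compress_lt (hpi : i ≠ p) (h1 : v + Pi.single p 1 ∈ D) (h2 : v + Pi.single i 1 ∉ D) :
    ∑ u ∈ compress p i D, u p < ∑ u ∈ D, u p := by
  rw [compress, Finset.sum_image (fun a ha b hb h => pushDown_injOn hpi ha hb h)]
  refine Finset.sum_lt_sum (fun u _ => ?_) ⟨_, h1, ?_⟩
  · rw [pushDown_apply_p]; exact blockRank_le
  · rw [pushDown_apply_p, ← card_image_lower]
    have hnot : v p ∉ ((block p i D (v + Pi.single p 1)).filter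
        fun u => u p < (v + Pi.single p 1 : Fin n → ℕ) p).image (fun u => u p) := by
      intro hx
      obtain ⟨b, hb, hbp⟩ := Finset.mem_image.1 hx
      have hb' := mem_block.1 (Finset.mem_filter.1 hb).1
      have : b = v + Pi.single i 1 :=
        (hb'.2.trans (sameBlock_single hpi v).symm).ext (by simpa [hpi.symm] using hbp)
      exact h2 (this ▸ hb'.1)
    have hss := Finset.card_lt_card
      (Finset.ssubset_iff_subset_ne.2 ⟨image_lower_subset (p := p) (i := i) (D := D)
        (v := v + Pi.single p 1), fun heq => hnot (by rw [heq]; simp)⟩)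
    simpa using hss

/-! ### Macaulay's bound -/

/-- The elements `x_p v` with `v ∈ D` and the `x_p`-free part of the shadow are disjoint. -/
lemma disjoint_parts (S : Finset (Fin n)) :
    Disjoint (D.image fun v : Fin n → ℕ => v + Pi.single p 1)
      (shadOn (S.erase p) (D.filter fun v => v p = 0)) := by
  rw [Finset.disjoint_left]
  intro x hx hx'
  obtain ⟨v, _, rfl⟩ := Finset.mem_image.1 hx
  obtain ⟨k, hk, u, hu, h⟩ := mem_shadOn.1 hx'
  have h1 := congrFun h p
  have h2 := (Finset.mem_filter.1 hu).2
  simp [h2, (Finset.ne_of_mem_erase hk).symm] at h1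

lemma parts_subset {S : Finset (Fin n)} (hp : p ∈ S) :
    (D.image fun v => v + Pi.single p 1) ∪
      shadOn (S.erase p) (D.filter fun v => v p = 0) ⊆ shadOn S D := by
  intro x hx
  rcases Finset.mem_union.1 hx with hx | hx
  · obtain ⟨v, hv, rfl⟩ := Finset.mem_image.1 hx
    exact mem_shadOn.2 ⟨p, hp, v, hv, rfl⟩
  · obtain ⟨k, hk, u, hu, rfl⟩ := mem_shadOn.1 hx
    exact mem_shadOn.2 ⟨k, Finset.mem_of_mem_erase hk, u, (Finset.mem_filter.1 hu).1, rfl⟩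

lemma card_parts (S : Finset (Fin n)) :
    ((D.image fun v => v + Pi.single p 1) ∪
      shadOn (S.erase p) (D.filter fun v => v p = 0)).card =
      D.card + (shadOn (S.erase p) (D.filter fun v => v p = 0)).card := by
  rw [Finset.card_union_of_disjoint (disjoint_parts S),
    Finset.card_image_of_injective _ (add_left_injective _)]

end

lemma add_single_sub {n : ℕ} {p : Fin n} {v : Fin n → ℕ} (h : v p ≠ 0) :
    (v - Pi.single p 1) + Pi.single p 1 = v := by
  funext k
  by_cases hk : k = p
  · subst hk; simp; omega
  · simp [hk]

/-- Macaulay's lower bound for the shadow of a finite set of monomials. The monomials need not have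
the same degree, nor involve only the variables in `S`. -/
theorem macUp_le_card_shadOn {n : ℕ} (m : ℕ) (S : Finset (Fin n)) (hS : S.card = m + 1)
    (D : Finset (Fin n → ℕ)) : macUp m D.card ≤ (shadOn S D).card := by
  induction m generalizing S D with
  | zero =>
    obtain ⟨p, rfl⟩ := Finset.card_eq_one.1 hS
    have := Finset.card_le_card (parts_subset (D := D) (Finset.mem_singleton_self p))
    rw [card_parts] at this
    simp only [macUp]
    omega
  | succ m ihm =>
    obtain ⟨p, hp⟩ : S.Nonempty := Finset.card_pos.1 (by omega)
    obtain ⟨N, hN⟩ : ∃ N, ∑ u ∈ D, u p = N := ⟨_, rfl⟩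
    induction N using Nat.strong_induction_on generalizing D with
    | _ N ih =>
    by_cases hst : ∀ i ∈ S, ∀ v : Fin n → ℕ, v + Pi.single p 1 ∈ D → v + Pi.single i 1 ∈ D
    · set E : Finset (Fin n → ℕ) := (D.filter fun v => v p ≠ 0).image fun v => v - Pi.single p 1
        with hE
      have hinj : Set.InjOn (fun v : Fin n → ℕ => v - Pi.single p 1)
          (D.filter fun v => v p ≠ 0 : Finset (Fin n → ℕ)) := by
        intro a ha b hb hab
        rw [← add_single_sub (Finset.mem_filter.1 ha).2, ← add_single_sub (Finset.mem_filter.1 hb).2]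
        simp only at hab
        rw [hab]
      have hEcard : (D.filter fun v => v p = 0).card + E.card = D.card := by
        rw [hE, Finset.card_image_of_injOn hinj]
        exact Finset.card_filter_add_card_filter_not (s := D) (fun v => v p = 0)
      have hsub : shadOn S E ⊆ D := by
        intro w hw
        obtain ⟨k, hk, u, hu, rfl⟩ := mem_shadOn.1 hw
        obtain ⟨v, hv, rfl⟩ := Finset.mem_image.1 hu
        rw [Finset.mem_filter] at hv
        exact hst k hk _ (by rw [add_single_sub hv.2]; exact hv.1)
      have hEbound : macUp (m + 1) E.card ≤ D.card := by
        rcases Finset.eq_empty_or_nonempty E with h0 | h0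
        · rw [h0, Finset.card_empty, macUp_zero_right]; exact Nat.zero_le _
        refine (ih _ ?_ E rfl).trans (Finset.card_le_card hsub)
        rw [← hN, hE, Finset.sum_image (fun a ha b hb h => hinj ha hb h)]
        refine (Finset.sum_lt_sum_of_nonempty (g := fun v => v p) ?_ ?_).trans_le
          (Finset.sum_le_sum_of_subset (Finset.filter_subset _ _))
        · exact Finset.image_nonempty.1 h0
        · intro v hv
          have := (Finset.mem_filter.1 hv).2
          simp; omega
      have hnum := add_macDDown_le m hEbound
      have h0 : macDDown (m + 1) D.card ≤ (D.filter fun v => v p = 0).card := by omega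
      have h1 := ihm (S.erase p) (by rw [Finset.card_erase_of_mem hp]; omega)
        (D.filter fun v => v p = 0)
      have h2 := (macUp_strictMono m).monotone h0
      have h3 := Finset.card_le_card (parts_subset (D := D) hp)
      rw [card_parts] at h3
      rw [macUp_eq_add]
      omega
    · push Not at hst
      obtain ⟨i, hi, v, h1, h2⟩ := hst
      have hpi : i ≠ p := by rintro rfl; exact h2 h1
      have h3 := ih _ (hN ▸ sum_compress_lt hpi h1 h2) (compress p i D) rfl
      rw [card_compress hpi] at h3
      exact h3.trans (card_shadOn_compress_le hpi hi hp)

lemma Dset_subset {n : ℕ} {V : Finset (Fin n → ℕ)} (hgcd : gcdMon V = 0) (j : Fin n) :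
    Dset V j ⊆ V.filter fun v => v j = 0 := by
  intro v hv
  simp only [Dset, Kset, Finset.mem_sdiff] at hv
  obtain ⟨hv, hn⟩ := hv
  split_ifs at hn with hc
  · exact absurd hv hn
  rw [Finset.mem_filter]
  refine ⟨hv, ?_⟩
  by_contra h0
  refine hn (Finset.mem_filter.2 ⟨hv, fun k => ?_⟩)
  by_cases hk : k = j
  · subst hk; simp [hgcd]; omega
  · simp [hgcd, hk]

/-- Let `V` be a nonempty Gotzmann set of monomials of degree `d` in
`K[x_1,…,x_n]` with `gcd(V) = 1`, and assume `|D_i(V)| = |V|_{<<n-1>>}` for every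
`i`.  If `v ∈ M^d` with `v ∉ V`, then for all indices `i, j` with `x_i ∣ v` the
monomial `(x_j/x_i)·v` does not belong to `V`. -/
theorem not_mem_of_swap {n d : ℕ} (hn : 0 < n) (V : Finset (Fin n → ℕ))
    (hne : V.Nonempty) (hdeg : ∀ v ∈ V, ∑ i, v i = d)
    (hG : (shad V).card = macUp (n - 1) V.card)
    (hgcd : gcdMon V = 0)
    (hD : ∀ i : Fin n, (Dset V i).card = macDDown (n - 1) V.card)
    (v : Fin n → ℕ) (hv : ∑ i, v i = d) (hvV : v ∉ V)
    (i j : Fin n) (hi : 0 < v i) :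
    (fun m => v m + (Pi.single j 1 : Fin n → ℕ) m - (Pi.single i 1 : Fin n → ℕ) m) ∉ V := by
  intro hu
  by_cases hij : i = j
  · subst hij
    exact hvV (by simpa using hu)
  obtain ⟨m, rfl⟩ : ∃ m, n = m + 2 := by
    have h1 := i.isLt
    have h2 := j.isLt
    have h3 : (i : ℕ) ≠ j := fun h => hij (Fin.ext h)
    exact ⟨n - 2, by omega⟩
  have hw : v + Pi.single j 1 ∈ shadOn Finset.univ V := by
    refine mem_shadOn.2 ⟨i, Finset.mem_univ _, _, hu, ?_⟩
    funext k
    by_cases hk : k = i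
    · subst hk; simp [hij]; omega
    · simp [hk]
  have hnot : v + Pi.single j 1 ∉ (V.image fun v => v + Pi.single j 1) ∪
      shadOn (Finset.univ.erase j) (V.filter fun v => v j = 0) := by
    intro hx
    rcases Finset.mem_union.1 hx with hx | hx
    · obtain ⟨u, hu, h⟩ := Finset.mem_image.1 hx
      exact hvV (add_left_injective _ h ▸ hu)
    · obtain ⟨k, hk, u, hu, h⟩ := mem_shadOn.1 hx
      have h1 := congrFun h j
      have h2 := (Finset.mem_filter.1 hu).2
      simp [h2, (Finset.ne_of_mem_erase hk).symm] at h1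
  have hcard := Finset.card_le_card
    (Finset.insert_subset hw (parts_subset (D := V) (Finset.mem_univ j)))
  rw [Finset.card_insert_of_notMem hnot, card_parts] at hcard
  have h1 := macUp_le_card_shadOn m (Finset.univ.erase j)
    (by rw [Finset.card_erase_of_mem (Finset.mem_univ _)]; simp) (V.filter fun v => v j = 0)
  have h2 := (macUp_strictMono m).monotone (Finset.card_le_card (Dset_subset hgcd j))
  have h3 : (shadOn Finset.univ V).card = macUp (m + 1) V.card := hG
  rw [macUp_eq_add, ← show (Dset V j).card = macDDown (m + 1) V.card from hD j] at h3
  omega
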